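/- Let K be a number field with r1 ≥ 1 real places and r2 complex places, and let O be an order in K. Let O^×_{≫0} be the subgroup of units of O that are totally positive, let (O^×)² = {u² : u ∈ O^×}, and let sgn : O^× → {±1}^{r1} be the homomorphism sending a unit u to the tuple of signs of φ(u) over all real embeddings φ : K → ℝ. Then #(O^×_{≫0}/(O^×)²) · #(Image(sgn)) = 2^{r1+r2}. -/

import Mathlib

set_option synthInstance.maxHeartbeats 1000000
set_option maxHeartbeats 1000000
open NumberField

variable (K : Type) [Field K] [NumberField K] (O : Subring K) [IsFractionRing O K]

/-- The subgroup `O^×_{≫0}` of totally positive units of an order `O` in a number field `K`. -/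
noncomputable def totPosUnitsOrd : Subgroup Oˣ where
  carrier := {u | ∀ φ : K →+* ℝ, 0 < φ (algebraMap O K (u : O))}
  one_mem' := by
    intro φ
    rw [Units.val_one, _root_.map_one, _root_.map_one]
    exact one_pos
  mul_mem' := by
    intro a b ha hb φ
    rw [Units.val_mul, _root_.map_mul, _root_.map_mul]
    exact mul_pos (ha φ) (hb φ)
  inv_mem' := by
    intro a ha φ
    have h1 : φ (algebraMap O K ((a : Oˣ) : O)) * φ (algebraMap O K ((a⁻¹ : Oˣ) : O)) = 1 := by
      rw [← _root_.map_mul, ← _root_.map_mul, ← Units.val_mul, mul_inv_cancel,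
        Units.val_one, _root_.map_one, _root_.map_one]
    have h2 : φ (algebraMap O K ((a⁻¹ : Oˣ) : O)) = (φ (algebraMap O K ((a : Oˣ) : O)))⁻¹ :=
      eq_inv_of_mul_eq_one_right h1
    rw [h2]
    exact inv_pos.mpr (ha φ)

lemma idx_free (n : ℕ) : (nsmulAddMonoidHom 2 : (Fin n →₀ ℤ) →+ _).range.index = 2 ^ n := by
  let f : (Fin n →₀ ℤ) →+ (Fin n → ZMod 2) :=
    { toFun := fun x i => (x i : ZMod 2)
      map_zero' := by ext; simp
      map_add' := by intros; ext; simp }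
  have hf : Function.Surjective f := by
    intro y
    refine ⟨Finsupp.equivFunOnFinite.symm (fun i => ((y i).val : ℤ)), ?_⟩
    ext i
    simp [f]
  have hk : (nsmulAddMonoidHom 2 : (Fin n →₀ ℤ) →+ _).range = f.ker := by
    ext x
    simp only [AddMonoidHom.mem_range, AddMonoidHom.mem_ker]
    constructor
    · rintro ⟨y, rfl⟩
      ext i
      simp only [f, AddMonoidHom.coe_mk, ZeroHom.coe_mk, nsmulAddMonoidHom_apply,
        Finsupp.smul_apply, Pi.zero_apply]
      simp only [nsmul_eq_mul, Int.cast_mul, Int.cast_natCast]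
      have : ((2:ℕ) : ZMod 2) = 0 := ZMod.natCast_self 2
      rw [this, zero_mul]
    · intro h
      have h2 : ∀ i, (2:ℤ) ∣ x i := fun i => by
        have := congrFun h i
        exact (ZMod.intCast_zmod_eq_zero_iff_dvd (x i) 2).1 this
      choose y hy using h2
      refine ⟨Finsupp.equivFunOnFinite.symm y, ?_⟩
      ext i
      simp [hy i]
  rw [hk, AddSubgroup.index_ker, AddMonoidHom.range_eq_top.2 hf]
  simp


lemma idx_gen_aux (A T : Type*) [AddCommGroup A] [AddCommGroup T] [Finite T]
    [Module.Finite ℤ A] (n : ℕ) (g : A ≃+ (Fin n →₀ ℤ) × T) :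
    (nsmulAddMonoidHom 2 : A →+ A).range.index =
      Nat.card (nsmulAddMonoidHom 2 : A →+ A).ker * 2 ^ Module.finrank ℤ A := by
  have h1 : (nsmulAddMonoidHom 2 : A →+ A).range =
      ((nsmulAddMonoidHom 2 : (Fin n →₀ ℤ) →+ _).range.prod
        (nsmulAddMonoidHom 2 : T →+ T).range).comap (g : A →+ _) := by
    ext x
    simp only [AddMonoidHom.mem_range, AddSubgroup.mem_comap, AddSubgroup.mem_prod,
      nsmulAddMonoidHom_apply]
    constructor
    · rintro ⟨y, rfl⟩
      exact ⟨⟨(g y).1, by simp⟩, ⟨(g y).2, by simp⟩⟩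
    · rintro ⟨⟨a, ha⟩, ⟨b, hb⟩⟩
      refine ⟨g.symm (a, b), ?_⟩
      apply g.injective
      rw [map_nsmul, g.apply_symm_apply]
      exact Prod.ext ha hb
  have h2 : Nat.card (nsmulAddMonoidHom 2 : A →+ A).ker =
      Nat.card (nsmulAddMonoidHom 2 : T →+ T).ker := by
    symm
    refine Nat.card_congr (Equiv.ofBijective
      (fun t => ⟨g.symm (0, (t : T)), ?_⟩) ⟨?_, ?_⟩)
    · rw [AddMonoidHom.mem_ker, nsmulAddMonoidHom_apply, ← map_nsmul, Prod.smul_mk]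
      have := t.2
      rw [AddMonoidHom.mem_ker, nsmulAddMonoidHom_apply] at this
      rw [this, smul_zero]
      exact map_zero g.symm
    · intro a b hab
      have := g.symm.injective (Subtype.ext_iff.1 hab)
      exact Subtype.ext (Prod.ext_iff.1 this).2
    · rintro ⟨x, hx⟩
      rw [AddMonoidHom.mem_ker, nsmulAddMonoidHom_apply] at hx
      have hg : 2 • g x = 0 := by rw [← map_nsmul, hx, map_zero]
      have hg1 : (g x).1 = 0 := by
        ext i
        have := DFunLike.congr_fun (Prod.ext_iff.1 hg).1 i
        simpa using this
      refine ⟨⟨(g x).2, (Prod.ext_iff.1 hg).2⟩, ?_⟩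
      apply Subtype.ext
      apply g.injective
      simp only [AddEquiv.apply_symm_apply]
      exact Prod.ext hg1.symm rfl
  have h3 : Module.finrank ℤ A = n := by
    let f : A →ₗ[ℤ] (Fin n →₀ ℤ) := ((AddMonoidHom.fst (Fin n →₀ ℤ) T).comp (g : A →+ (Fin n →₀ ℤ) × T)).toIntLinearMap
    have hf : Function.Surjective f := fun y => ⟨g.symm (y, 0), by simp [f]⟩
    have e1 := (f.quotKerEquivOfSurjective hf).finrank_eq
    have e2 := Submodule.finrank_quotient_add_finrank (LinearMap.ker f)
    have e3 : Module.finrank ℤ (LinearMap.ker f) = 0 := by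
      rw [Module.finrank_eq_zero_iff]
      rintro ⟨x, hx⟩
      refine ⟨(Nat.card T : ℤ), by exact_mod_cast Nat.card_pos.ne', ?_⟩
      apply Subtype.ext
      apply g.injective
      have hx' : (g x).1 = 0 := hx
      simp only [Submodule.coe_smul, natCast_zsmul, map_nsmul, Submodule.coe_zero, map_zero]
      refine Prod.ext ?_ ?_
      · simp [hx']
      · simp
    rw [e1, e3] at e2
    simpa using e2.symm
  rw [h1, AddSubgroup.index_comap_of_surjective _ g.surjective, AddSubgroup.index_prod, idx_free,
    AddSubgroup.index_range, h2, h3, mul_comm]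

lemma idx_gen (A : Type*) [AddCommGroup A] [Module.Finite ℤ A] :
    (nsmulAddMonoidHom 2 : A →+ A).range.index =
      Nat.card (nsmulAddMonoidHom 2 : A →+ A).ker * 2 ^ Module.finrank ℤ A := by
  have : AddGroup.FG A := Module.Finite.iff_addGroup_fg.1 inferInstance
  obtain ⟨n, ι, _, p, hp, e, ⟨g⟩⟩ := AddCommGroup.equiv_free_prod_directSum_zmod A
  classical
  have : ∀ i, NeZero (p i ^ e i) := fun i => ⟨pow_ne_zero _ (hp i).ne_zero⟩
  have hfin : Finite (DirectSum ι fun i => ZMod (p i ^ e i)) :=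
    Finite.of_equiv _ (DirectSum.addEquivProd (fun i => ZMod (p i ^ e i))).symm.toEquiv
  exact idx_gen_aux A _ n g

lemma idx_mul (G : Type*) [CommGroup G] [Module.Finite ℤ (Additive G)] :
    (powMonoidHom 2 : G →* G).range.index =
      Nat.card (powMonoidHom 2 : G →* G).ker * 2 ^ Module.finrank ℤ (Additive G) :=
  idx_gen (Additive G)

section
variable [Module.Finite ℤ O]

/-- The inclusion of an order in the maximal order. -/
def ordIncl : O →+* 𝓞 K where
  toFun x := ⟨(x : K), (IsIntegral.of_finite ℤ x).map (O.subtype.toIntAlgHom)⟩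
  map_one' := rfl
  map_zero' := rfl
  map_add' _ _ := rfl
  map_mul' _ _ := rfl

lemma ordIncl_inj : Function.Injective (ordIncl K O) := fun x y h =>
  Subtype.ext (congrArg (fun z : 𝓞 K => (z : K)) h)

lemma exists_conductor : ∃ b : 𝓞 K, b ≠ 0 ∧ ∀ x : 𝓞 K, ∃ y : O, ordIncl K O y = b * x := by
  obtain ⟨s, hs⟩ := (Module.Finite.fg_top : (⊤ : Submodule ℤ (𝓞 K)).FG)
  classical
  obtain ⟨b, hb⟩ := IsLocalization.exist_integer_multiples_of_finset (nonZeroDivisors O)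
    (s.image (fun x : 𝓞 K => (x : K)))
  refine ⟨ordIncl K O b, ?_, ?_⟩
  · intro h
    exact nonZeroDivisors.coe_ne_zero b (ordIncl_inj K O (by rw [h, map_zero]))
  · intro x
    have hx : x ∈ Submodule.span ℤ (s : Set (𝓞 K)) := by rw [hs]; trivial
    induction hx using Submodule.span_induction with
    | mem x h =>
      obtain ⟨y, hy⟩ := hb (x : K) (Finset.mem_image_of_mem _ h)
      exact ⟨y, RingOfIntegers.ext hy⟩
    | zero => exact ⟨0, by simp⟩
    | add x y _ _ hx hy =>
      obtain ⟨a, ha⟩ := hx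
      obtain ⟨c, hc⟩ := hy
      exact ⟨a + c, by rw [map_add, ha, hc, mul_add]⟩
    | smul n x _ hx =>
      obtain ⟨a, ha⟩ := hx
      exact ⟨n • a, by rw [map_zsmul, ha, mul_smul_comm]⟩

lemma exists_pow_mem (u : (𝓞 K)ˣ) : ∃ n : ℕ, n ≠ 0 ∧
    ∃ v : Oˣ, Units.map (ordIncl K O : O →* 𝓞 K) v = u ^ n := by
  obtain ⟨b, hb0, hb⟩ := exists_conductor K O
  have hfin : Finite (𝓞 K ⧸ Ideal.span {b}) :=
    Ideal.finiteQuotientOfFreeOfNeBot _ (by simpa using hb0)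
  let q : (𝓞 K)ˣ →* (𝓞 K ⧸ Ideal.span {b})ˣ :=
    Units.map (Ideal.Quotient.mk (Ideal.span {b}) : 𝓞 K →* _)
  obtain ⟨n, hn, hu⟩ := (isOfFinOrder_of_finite (q u)).exists_pow_eq_one
  have key : ∀ w : (𝓞 K)ˣ, q w = 1 → ∃ y : O, ordIncl K O y = w := by
    intro w hw
    have h1 : Ideal.Quotient.mk (Ideal.span {b}) (w : 𝓞 K) = Ideal.Quotient.mk _ 1 :=
      congrArg Units.val hw
    rw [Ideal.Quotient.eq, Ideal.mem_span_singleton] at h1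
    obtain ⟨c, hc⟩ := h1
    obtain ⟨y, hy⟩ := hb c
    exact ⟨y + 1, by rw [map_add, map_one, hy, ← hc, sub_add_cancel]⟩
  obtain ⟨x, hx⟩ := key (u ^ n) (by rw [map_pow, hu])
  obtain ⟨y, hy⟩ := key (u ^ n)⁻¹ (by rw [map_inv, map_pow, hu, inv_one])
  have hxy : x * y = 1 := ordIncl_inj K O (by rw [map_mul, hx, hy, map_one, Units.mul_inv])
  exact ⟨n, hn.ne', ⟨x, y, hxy, by rw [mul_comm, hxy]⟩, Units.ext hx⟩

/-- The inclusion on units, as a linear map. -/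
noncomputable def unitsLin : Additive Oˣ →ₗ[ℤ] Additive (𝓞 K)ˣ :=
  (MonoidHom.toAdditive (Units.map (ordIncl K O : O →* 𝓞 K))).toIntLinearMap

lemma unitsLin_inj : Function.Injective (unitsLin K O) :=
  Units.map_injective (f := (ordIncl K O : O →* 𝓞 K)) (ordIncl_inj K O)

lemma finite_units : Module.Finite ℤ (Additive Oˣ) :=
  Module.Finite.of_injective _ (unitsLin_inj K O)

lemma finrank_units : Module.finrank ℤ (Additive Oˣ) = Units.rank K := by
  have e1 := (LinearEquiv.ofInjective _ (unitsLin_inj K O)).finrank_eq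
  have e2 := Submodule.finrank_quotient_add_finrank (LinearMap.range (unitsLin K O))
  have e3 : Module.finrank ℤ (Additive (𝓞 K)ˣ ⧸ LinearMap.range (unitsLin K O)) = 0 := by
    rw [Module.finrank_eq_zero_iff]
    intro x
    obtain ⟨x, rfl⟩ := Submodule.Quotient.mk_surjective _ x
    obtain ⟨n, hn, v, hv⟩ := exists_pow_mem K O (Additive.toMul x)
    refine ⟨n, by exact_mod_cast hn, ?_⟩
    rw [← Submodule.Quotient.mk_smul, Submodule.Quotient.mk_eq_zero]
    refine ⟨Additive.ofMul v, ?_⟩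
    rw [natCast_zsmul]
    exact congrArg Additive.ofMul hv
  rw [e3, zero_add, ← e1, NumberField.Units.finrank_eq] at e2
  exact e2

end

lemma card_ker_sq : Nat.card (powMonoidHom 2 : Oˣ →* Oˣ).ker = 2 := by
  have h : ((powMonoidHom 2 : Oˣ →* Oˣ).ker : Set Oˣ) = {1, -1} := by
    ext u
    simp only [SetLike.mem_coe, MonoidHom.mem_ker, powMonoidHom_apply, Set.mem_insert_iff,
      Set.mem_singleton_iff]
    constructor
    · intro h
      have h' : (u : O) ^ 2 = 1 := by rw [← Units.val_pow_eq_pow_val, h, Units.val_one]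
      rw [sq] at h'
      rcases mul_self_eq_one_iff.1 h' with h | h
      · exact Or.inl (Units.ext h)
      · exact Or.inr (Units.ext (by simpa using h))
    · rintro (rfl | rfl) <;> simp
  have hne : (1 : Oˣ) ≠ -1 := by
    intro h
    have h1 : (1 : K) = -1 := congrArg (fun z : Oˣ => ((z : O) : K)) h
    norm_num at h1
  rw [← SetLike.coe_sort_coe, h, Nat.card_coe_set_eq, Set.ncard_pair hne]

lemma real_sign_mul (x y : ℝ) : Real.sign (x * y) = Real.sign x * Real.sign y := by
  rcases lt_trichotomy x 0 with hx | rfl | hx <;> rcases lt_trichotomy y 0 with hy | rfl | hy <;>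
    simp [Real.sign_of_neg, Real.sign_of_pos, mul_pos_of_neg_of_neg, mul_neg_of_neg_of_pos,
      mul_neg_of_pos_of_neg, *]

/-- The sign homomorphism. -/
noncomputable def sgnHom : Oˣ →* ((K →+* ℝ) → ℝ) where
  toFun u φ := Real.sign (φ (algebraMap O K (u : O)))
  map_one' := by ext φ; simp
  map_mul' u v := by ext φ; simp [real_sign_mul]

lemma sgnHom_ker : (sgnHom K O).ker = totPosUnitsOrd K O := by
  ext u
  rw [MonoidHom.mem_ker]
  constructor
  · intro h φ
    have h1 : Real.sign (φ (algebraMap O K (u : O))) = 1 := congrFun h φ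
    by_contra hc
    rcases (not_lt.1 hc).lt_or_eq with h2 | h2
    · rw [Real.sign_of_neg h2] at h1; norm_num at h1
    · rw [h2, Real.sign_zero] at h1; norm_num at h1
  · intro h
    ext φ
    exact Real.sign_of_pos (h φ)

lemma squares_le : (powMonoidHom 2 : Oˣ →* Oˣ).range ≤ totPosUnitsOrd K O := by
  rintro _ ⟨u, rfl⟩ φ
  rw [powMonoidHom_apply, Units.val_pow_eq_pow_val, map_pow, map_pow]
  have hu : φ (algebraMap O K (u : O)) ≠ 0 :=
    (((u.isUnit).map (algebraMap O K)).map φ).ne_zero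
  positivity

/-- **Totally positive units, squares, and the image of the sign map.**
For an order `O` in a number field `K` with `r1 ≥ 1` real places and `r2` complex places,
`#(O^×_{≫0}/(O^×)²) · #(Image sgn) = 2^(r1+r2)`, where `sgn` sends a unit of `O` to the
tuple of signs of its images under all real embeddings of `K`. -/
theorem card_totPos_mod_squares_mul_card_sgn_image (r1 r2 : ℕ) (hr1pos : 1 ≤ r1)
    (hr1 : Nat.card {w : InfinitePlace K // w.IsReal} = r1)
    (hr2 : Nat.card {w : InfinitePlace K // w.IsComplex} = r2)
    [Module.Finite ℤ O] :
    Nat.card (totPosUnitsOrd K O ⧸ Subgroup.comap (totPosUnitsOrd K O).subtype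
        (powMonoidHom 2 : Oˣ →* Oˣ).range) *
      Nat.card ↥(Set.range fun u : Oˣ => fun φ : K →+* ℝ =>
        Real.sign (φ (algebraMap O K (u : O)))) = 2 ^ (r1 + r2) := by
  have := finite_units K O
  have h1 := idx_mul Oˣ
  rw [card_ker_sq, finrank_units] at h1
  have h2 := Subgroup.relIndex_mul_index (squares_le K O)
  have h3 : (totPosUnitsOrd K O).index = Nat.card ↥(Set.range fun u : Oˣ => fun φ : K →+* ℝ =>
        Real.sign (φ (algebraMap O K (u : O)))) := by
    have hk : (sgnHom K O).ker = (sgnHom K O).toHomUnits.ker := by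
      ext u
      rw [MonoidHom.mem_ker, MonoidHom.mem_ker, Units.ext_iff, MonoidHom.coe_toHomUnits,
        Units.val_one]
    rw [← sgnHom_ker, hk, Subgroup.index_ker, ← SetLike.coe_sort_coe,
      ← Nat.card_image_of_injective Units.val_injective, MonoidHom.coe_range, ← Set.range_comp]
    rfl
  have h4 : Fintype.card (InfinitePlace K) = r1 + r2 := by
    classical
    rw [InfinitePlace.card_eq_nrRealPlaces_add_nrComplexPlaces, ← hr1, ← hr2,
      Nat.card_eq_fintype_card, Nat.card_eq_fintype_card]
  rw [← h3]
  refine h2.trans (h1.trans ?_)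
  rw [Units.rank, h4, ← pow_succ', Nat.sub_add_cancel (by omega)]
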